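/- Suppose the mixed Hodge–Riemann relations hold in co-degree 1: for all convex bodies K_2,…,K_n ∈ K_+^∞ and every non-zero φ ∈ Val_{n−1}^∞ with φ * V(·[n−1],K_2) * ⋯ * V(·[n−1],K_n) = 0, one has −conj(φ) * φ * V(·[n−1],K_3) * ⋯ * V(·[n−1],K_n) > 0. Then the Aleksandrov–Fenchel inequality V(K_1,K_2,K_3,…,K_n)² ≥ V(K_1,K_1,K_3,…,K_n) · V(K_2,K_2,K_3,…,K_n) holds for all convex bodies K_1,…,K_n ∈ K_+^∞. -/

import Mathlib

/-!
Fix `L = (K_3, …, K_n)` and write `v_K = V(·[n-1], K)`. Up to a positive factor `κ`, the symmetric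
form `(φ, ψ) ↦ φ * ψ * v_{K_3} * ⋯ * v_{K_n}` takes the value `V(K, K', L)` at `(v_K, v_{K'})`
(`convList_famAF`). With `a = V(K_1,K_1,L)`, `b = V(K_1,K_2,L)`, `c = V(K_2,K_2,L)`, the valuation
`φ = c v_{K_1} - b v_{K_2}` is real and orthogonal to `v_{K_2}`, and the form takes the value
`κ c (ac - b²)` at `(φ, φ)`. The Hodge–Riemann relations make this non-positive, so `ac ≤ b²`
follows once `c > 0`.

Positivity of `c` is also extracted from the hypothesis (`mixedVol_pos`). If `V(M,M,L) = 0`, then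
`v_M` is orthogonal to itself, and the Hodge–Riemann relations for `φ = v_M ≠ 0` give `0 < 0`.
Thus `V(M,M,L)` never vanishes on `K_+^∞`. It equals `vol_n(M) > 0` when every `L_i` is `M`, and
moving the `L_i` one at a time along Minkowski segments, which stay in `K_+^∞` (`segBody_mem`),
keeps it positive by the intermediate value theorem; continuity in one body is the continuity of
a smooth valuation (`continuous_mixedVol_update`).
-/

open MeasureTheory Pointwise
noncomputable section

/-- Euclidean space `ℝ^n`. -/
abbrev ESp (n : ℕ) : Type := EuclideanSpace ℝ (Fin n)

/-- Convex bodies (non-empty compact convex sets) in `ℝ^n`. -/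
abbrev Body (n : ℕ) : Type := ConvexBody (ESp n)

/-- Complex-valued functionals on convex bodies; valuations live here. -/
abbrev Vl (n : ℕ) : Type := Body n → ℂ

variable {n : ℕ}

/-- The convex body `{x}`. -/
def ptBody (x : ESp n) : Body n :=
  ⟨{x}, convex_singleton x, isCompact_singleton, Set.singleton_nonempty x⟩

/-- The convex body `-K`. -/
def negBody (K : Body n) : Body n :=
  ⟨-(K : Set (ESp n)), K.convex.neg, K.isCompact.neg, K.nonempty.neg⟩

/-- Finite additivity: `φ(K ∪ L) + φ(K ∩ L) = φ(K) + φ(L)` whenever `K ∪ L` is convex. -/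
def IsValuation (φ : Vl n) : Prop :=
  ∀ K L M N : Body n, (M : Set (ESp n)) = (K : Set (ESp n)) ∪ (L : Set (ESp n)) →
    (N : Set (ESp n)) = (K : Set (ESp n)) ∩ (L : Set (ESp n)) →
    φ M + φ N = φ K + φ L

/-- Translation invariance. -/
def TransInv (φ : Vl n) : Prop := ∀ (K : Body n) (x : ESp n), φ (K + ptBody x) = φ K

/-- `φ` is homogeneous of degree `k`. -/
def IsHomog (k : ℕ) (φ : Vl n) : Prop :=
  ∀ r : ℝ, 0 < r → ∀ K : Body n, φ (r • K) = (r : ℂ) ^ k * φ K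

/-- `φ` has parity `s` (`s = 0`: even, `s = 1`: odd). -/
def HasParity (s : ℕ) (φ : Vl n) : Prop :=
  ∀ K : Body n, φ (negBody K) = (-1 : ℂ) ^ s * φ K

/-- The Euler characteristic `χ`. -/
def chiVal : Vl n := fun _ => 1

/-- The Lebesgue measure `vol_n` as a valuation. -/
def volVal : Vl n := fun K => ((volume (K : Set (ESp n))).toReal : ℂ)

/-- The valuation `vol_n(· + A)`. -/
def volAdd (A : Body n) : Vl n :=
  fun K => ((volume ((K + A : Body n) : Set (ESp n))).toReal : ℂ)

/-- The valuation `vol_{2n}(Δ(·) + A × B)` on `ℝ^n × ℝ^n ≅ ℝ^{2n}`. -/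
def volDiagProd (A B : Body n) : Vl n := fun K =>
  ((volume (((fun x => (x, x)) '' (K : Set (ESp n))) +
      (A : Set (ESp n)) ×ˢ (B : Set (ESp n)))).toReal : ℂ)

/-- Pointwise complex conjugate of a valuation. -/
def conjVal (φ : Vl n) : Vl n := fun K => (starRingEnd ℂ) (φ K)

/-- The closed unit Euclidean ball `D` as a convex body. -/
def ballBody (n : ℕ) : Body n :=
  ⟨Metric.closedBall 0 1, convex_closedBall 0 1, isCompact_closedBall 0 1,
    ⟨0, Metric.mem_closedBall_self zero_le_one⟩⟩

/-- The mixed volume `V(K_1, …, K_n)`, via the inclusion–exclusion (polarization) formula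
`n! V(K_1,…,K_n) = ∑_{S ⊆ [n]} (-1)^{n-|S|} vol_n(∑_{i ∈ S} K_i)`. -/
def mixedVol (K : Fin n → Body n) : ℝ :=
  (n.factorial : ℝ)⁻¹ * ∑ S : Finset (Fin n), (-1 : ℝ) ^ (n - S.card) *
    (volume ((∑ i ∈ S, K i : Body n) : Set (ESp n))).toReal

/-- The family `(K[k], D[n-k])`: `k` copies of `K` and `n-k` copies of the unit ball. -/
def kD (K : Body n) (k : ℕ) : Fin n → Body n := fun i => if (i : ℕ) < k then K else ballBody n

/-- The mixed volume valuation `V(·[n-1], L)`. -/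
def mixedVal (L : Body n) : Vl n :=
  fun K => ((mixedVol (fun i => if (i : ℕ) < n - 1 then K else L) : ℝ) : ℂ)

/-- Iterated product `x^m` w.r.t. a bilinear product `mul` with unit `unit`. -/
def powWith (mul : Vl n →ₗ[ℂ] Vl n →ₗ[ℂ] Vl n) (unit x : Vl n) : ℕ → Vl n
  | 0 => unit
  | m + 1 => mul x (powWith mul unit x m)

open RealInnerProductSpace in
/-- The support function of a convex body. -/
def suppFn (K : Body n) (x : ESp n) : ℝ := sSup ((fun y => ⟪x, y⟫) '' (K : Set (ESp n)))

open RealInnerProductSpace in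
/-- The class `K_+^∞` of convex bodies with non-empty interior, smooth boundary and positive
Gauss–Kronecker curvature, characterized via the support function: `h_K` is smooth away from `0`
and its Hessian at every `x ≠ 0` is positive definite on `x^⊥`. -/
def KPlusInfty (n : ℕ) : Set (Body n) :=
  {K | (interior (K : Set (ESp n))).Nonempty ∧ ContDiffOn ℝ (⊤ : ℕ∞) (suppFn K) {(0 : ESp n)}ᶜ ∧
    ∀ x : ESp n, x ≠ 0 → ∀ v : ESp n, ⟪x, v⟫ = 0 → v ≠ 0 →
      0 < fderiv ℝ (fun y => fderiv ℝ (suppFn K) y v) x v}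

/-- The subspace of `k`-homogeneous functionals. -/
def homogSub (n k : ℕ) : Submodule ℂ (Vl n) where
  carrier := {φ | IsHomog k φ}
  add_mem' := by
    intro φ ψ hφ hψ r hr K
    simp only [Pi.add_apply, hφ r hr K, hψ r hr K]; ring
  zero_mem' := by intro r hr K; simp
  smul_mem' := by
    intro c φ hφ r hr K
    simp only [Pi.smul_apply, hφ r hr K, smul_eq_mul]; ring

/-- The subspace of functionals of parity `s`. -/
def paritySub (n : ℕ) (s : ℕ) : Submodule ℂ (Vl n) where
  carrier := {φ | HasParity s φ}
  add_mem' := by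
    intro φ ψ hφ hψ K
    simp only [Pi.add_apply, hφ K, hψ K]; ring
  zero_mem' := by intro K; simp
  smul_mem' := by
    intro c φ hφ K
    simp only [Pi.smul_apply, hφ K, smul_eq_mul]; ring

end

noncomputable section

/-- The mixed-volume valuation `V(·[n-k], A_1, …, A_k)`. -/
def genMixedVal {n k : ℕ} (A : Fin k → Body n) : Vl n := fun K =>
  ((mixedVol (fun i : Fin n =>
      if (i : ℕ) < n - k then K
      else if h : (i : ℕ) - (n - k) < k then A ⟨(i : ℕ) - (n - k), h⟩ else K) : ℝ) : ℂ)

/-- Iterated Bernig–Fu convolution of a list of valuations (with unit `vol_n`). -/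
def convList {n : ℕ} (conv : Vl n →ₗ[ℂ] Vl n →ₗ[ℂ] Vl n) : List (Vl n) → Vl n
  | [] => volVal
  | x :: xs => conv x (convList conv xs)

/-- The family `(K₁, K₂, L_1, …, L_{n-2})` of `n` convex bodies. -/
def famAF {n : ℕ} (K₁ K₂ : Body n) (L : Fin (n - 2) → Body n) : Fin n → Body n := fun i =>
  if (i : ℕ) = 0 then K₁ else if (i : ℕ) = 1 then K₂
  else if h : (i : ℕ) - 2 < n - 2 then L ⟨(i : ℕ) - 2, h⟩ else K₁

/-- The space `Val^∞` of smooth valuations with the Bernig–Fu convolution and its behavior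
on mixed volumes, packaged with their basic properties (Bernig–Fu, Hadwiger). -/
structure BFConvolution (n : ℕ) where
  /-- the subspace `Val^∞` of smooth valuations -/
  Smooth : Submodule ℂ (Vl n)
  smooth_val : ∀ φ ∈ Smooth, IsValuation φ ∧ TransInv φ ∧ Continuous φ
  kplus_good : ∀ K ∈ KPlusInfty n, volAdd K ∈ Smooth
  /-- the Bernig–Fu convolution -/
  conv : Vl n →ₗ[ℂ] Vl n →ₗ[ℂ] Vl n
  conv_spec : ∀ K ∈ KPlusInfty n, ∀ L ∈ KPlusInfty n,
    conv (volAdd K) (volAdd L) = volAdd (K + L)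
  conv_mem : ∀ φ ∈ Smooth, ∀ ψ ∈ Smooth, conv φ ψ ∈ Smooth
  conv_comm : ∀ φ ∈ Smooth, ∀ ψ ∈ Smooth, conv φ ψ = conv ψ φ
  conv_assoc : ∀ φ ∈ Smooth, ∀ ψ ∈ Smooth, ∀ ρ ∈ Smooth,
    conv (conv φ ψ) ρ = conv φ (conv ψ ρ)
  vol_smooth : volVal ∈ Smooth
  conv_vol : ∀ φ ∈ Smooth, conv volVal φ = φ
  /-- mixed-volume valuations with smooth strictly positively curved bodies are smooth -/
  mixed_smooth : ∀ (k : ℕ), k ≤ n → ∀ A : Fin k → Body n, (∀ i, A i ∈ KPlusInfty n) →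
    genMixedVal A ∈ Smooth ∧ IsHomog (n - k) (genMixedVal A)
  /-- `V(·[n-k],A_1,…,A_k) * V(·[n-l],B_1,…,B_l) = c_{k,l} V(·[n-k-l],A_1,…,A_k,B_1,…,B_l)` -/
  conv_mixed : ∀ k l : ℕ, k + l ≤ n → ∃ c : ℝ, 0 < c ∧
    ∀ (A : Fin k → Body n) (B : Fin l → Body n),
      (∀ i, A i ∈ KPlusInfty n) → (∀ j, B j ∈ KPlusInfty n) →
      conv (genMixedVal A) (genMixedVal B) = (c : ℂ) • genMixedVal (Fin.append A B)
  /-- `0`-homogeneous valuations are multiples of the Euler characteristic; this realizes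
  the identification `Val_0^∞ ≅ ℂ` via `χ`. -/
  grade_zero : ∀ φ : Vl n, IsValuation φ → TransInv φ → Continuous φ → IsHomog 0 φ →
    ∃ c : ℂ, φ = c • chiVal

/-! ### Mixed volumes -/

lemma coe_nsmul_body {n : ℕ} (K : Body n) (m : ℕ) :
    ((m • K : Body n) : Set (ESp n)) = (m : ℝ) • (K : Set (ESp n)) := by
  rw [← Nat.cast_smul_eq_nsmul NNReal, ConvexBody.coe_smul']
  rfl

/-- `V(K, …, K) = vol_n(K)`: the polarization sum is the `n`-th finite difference of
`m ↦ mⁿ vol_n(K)`. -/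
lemma mixedVol_const {n : ℕ} (K : Body n) :
    mixedVol (fun _ : Fin n => K) = (volume (K : Set (ESp n))).toReal := by
  have h1 : ∀ S : Finset (Fin n),
      (volume ((∑ _i ∈ S, K : Body n) : Set (ESp n))).toReal
        = (S.card : ℝ) ^ n * (volume (K : Set (ESp n))).toReal := by
    intro S
    rw [Finset.sum_const, coe_nsmul_body, Measure.addHaar_smul, ENNReal.toReal_mul,
      ENNReal.toReal_ofReal (abs_nonneg _), abs_of_nonneg (by positivity)]
    simp
  have h2 : ∑ S : Finset (Fin n), (-1 : ℝ) ^ (n - S.card) * (S.card : ℝ) ^ n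
      = n.factorial := by
    have h3 := congrFun (fwdDiff_iter_eq_factorial (R := ℝ) (n := n)) 0
    rw [fwdDiff_iter_eq_sum_shift] at h3
    rw [← Finset.powerset_univ,
      Finset.sum_powerset_apply_card (fun m => (-1 : ℝ) ^ (n - m) * (m : ℝ) ^ n)]
    simp only [Finset.card_univ, Fintype.card_fin]
    rw [show ((n.factorial : ℕ) : ℝ) = ((n.factorial : ℝ → ℝ)) 0 from rfl, ← h3]
    refine Finset.sum_congr rfl fun m _ => ?_
    simp only [nsmul_eq_mul, zsmul_eq_mul, zero_add]
    push_cast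
    ring
  unfold mixedVol
  simp only [h1, ← mul_assoc]
  rw [← Finset.sum_mul, h2, ← mul_assoc, inv_mul_cancel₀ (by positivity), one_mul]

lemma mixedVol_perm {n : ℕ} (K : Fin n → Body n) (σ : Equiv.Perm (Fin n)) :
    mixedVol (fun i => K (σ i)) = mixedVol K := by
  unfold mixedVol
  congr 1
  refine Fintype.sum_equiv (Equiv.finsetCongr σ) _ _ fun S => ?_
  simp [Equiv.finsetCongr_apply]

lemma genMixedVal_full {n : ℕ} (A : Fin n → Body n) (K : Body n) :
    genMixedVal A K = (mixedVol A : ℂ) := by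
  simp [genMixedVal]

lemma genMixedVal_congr {n k k' : ℕ} (h : k = k') (A : Fin k → Body n) (B : Fin k' → Body n)
    (hAB : ∀ i, A i = B (Fin.cast h i)) : genMixedVal A = genMixedVal B := by
  subst h
  congr 1
  exact funext hAB

lemma genMixedVal_zero {n : ℕ} (A : Fin 0 → Body n) : genMixedVal A = volVal := by
  funext K
  have : (fun i : Fin n =>
      if (i : ℕ) < n - 0 then K
      else if h : (i : ℕ) - (n - 0) < 0 then A ⟨(i : ℕ) - (n - 0), h⟩ else K) = fun _ => K := by
    funext i; simp
  simp only [genMixedVal, volVal, this, mixedVol_const]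

/-- Mixed volumes are continuous in each single body, the others being in `K_+^∞`: up to a
permutation, this is continuity of the smooth valuation `V(·[1], A_1, …, A_{n-1})`. -/
lemma continuous_mixedVol_update {m : ℕ} (C : BFConvolution (m + 1))
    (A : Fin (m + 1) → Body (m + 1)) (hA : ∀ i, A i ∈ KPlusInfty (m + 1)) (j : Fin (m + 1)) :
    Continuous fun X => mixedVol (Function.update A j X) := by
  let σ : Equiv.Perm (Fin (m + 1)) := Equiv.swap 0 j
  have key : ∀ X, mixedVol (Function.update A j X)
      = (genMixedVal (fun i : Fin m => A (σ i.succ)) X).re := by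
    intro X
    rw [← mixedVol_perm _ σ, genMixedVal, Complex.ofReal_re]
    congr 1
    funext i
    refine Fin.cases ?_ (fun i => ?_) i
    · simp [σ]
    · have : σ i.succ ≠ j := by
        intro h
        have := σ.injective (h.trans (Equiv.swap_apply_left 0 j).symm)
        exact Fin.succ_ne_zero i this
      simp [Function.update_of_ne this]
  simp_rw [key]
  exact Complex.continuous_re.comp
    (C.smooth_val _ (C.mixed_smooth m (by omega) _ fun i => hA _).1).2.2

/-! ### Segments in `K_+^∞` -/

/-- The Minkowski combination `(1-t)K + tL`. -/
def segBody {n : ℕ} (K L : Body n) (t : ℝ) : Body n := (1 - t) • K + t • L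

lemma mem_segBody {n : ℕ} {K L : Body n} {t : ℝ} {x : ESp n} :
    x ∈ (segBody K L t : Set (ESp n)) ↔ ∃ k ∈ K, ∃ l ∈ L, (1 - t) • k + t • l = x := by
  simp only [segBody, ConvexBody.coe_add, ConvexBody.coe_smul, Set.mem_add, Set.mem_smul_set,
    SetLike.mem_coe]
  constructor
  · rintro ⟨_, ⟨k, hk, rfl⟩, _, ⟨l, hl, rfl⟩, rfl⟩
    exact ⟨k, hk, l, hl, rfl⟩
  · rintro ⟨k, hk, l, hl, rfl⟩
    exact ⟨_, ⟨k, hk, rfl⟩, _, ⟨l, hl, rfl⟩, rfl⟩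

lemma segBody_zero {n : ℕ} (K L : Body n) : segBody K L 0 = K := by
  apply ConvexBody.ext
  ext x
  rw [mem_segBody]
  obtain ⟨l, hl⟩ := L.nonempty
  constructor
  · rintro ⟨k, hk, l, hl, rfl⟩
    simpa using hk
  · intro hx
    exact ⟨x, hx, l, hl, by simp⟩

lemma segBody_one {n : ℕ} (K L : Body n) : segBody K L 1 = L := by
  apply ConvexBody.ext
  ext x
  rw [mem_segBody]
  obtain ⟨k, hk⟩ := K.nonempty
  constructor
  · rintro ⟨k, hk, l, hl, rfl⟩
    simpa using hl
  · intro hx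
    exact ⟨k, hk, x, hx, by simp⟩

lemma continuous_segBody {n : ℕ} (K L : Body n) : Continuous (segBody K L) := by
  obtain ⟨R, hR⟩ := K.isBounded.exists_norm_le
  obtain ⟨R', hR'⟩ := L.isBounded.exists_norm_le
  have h0 : 0 ≤ R + R' := by
    obtain ⟨k, hk⟩ := K.nonempty
    obtain ⟨l, hl⟩ := L.nonempty
    have := hR k hk
    have := hR' l hl
    have := norm_nonneg k
    have := norm_nonneg l
    linarith
  have hone : ∀ s t : ℝ, ∀ x ∈ (segBody K L s : Set (ESp n)),
      ∃ y ∈ (segBody K L t : Set (ESp n)), dist x y ≤ (R + R') * dist s t := by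
    intro s t x hx
    obtain ⟨k, hk, l, hl, rfl⟩ := mem_segBody.1 hx
    refine ⟨_, mem_segBody.2 ⟨k, hk, l, hl, rfl⟩, ?_⟩
    have : (1 - s) • k + s • l - ((1 - t) • k + t • l) = (s - t) • (l - k) := by module
    rw [dist_eq_norm, this, norm_smul, mul_comm, Real.dist_eq, ← Real.norm_eq_abs]
    gcongr
    exact (norm_sub_le l k).trans (by linarith [hR k hk, hR' l hl])
  refine (LipschitzWith.of_dist_le_mul (K := ⟨R + R', h0⟩) fun s t => ?_).continuous
  rw [← ConvexBody.hausdorffDist_coe]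
  refine Metric.hausdorffDist_le_of_mem_dist (mul_nonneg h0 dist_nonneg) (hone s t) ?_
  intro x hx
  obtain ⟨y, hy, h⟩ := hone t s x hx
  exact ⟨y, hy, by rwa [dist_comm s t]⟩

open RealInnerProductSpace in
lemma suppFn_isLUB {n : ℕ} (K : Body n) (x : ESp n) :
    IsLUB ((fun y => ⟪x, y⟫) '' (K : Set (ESp n))) (suppFn K x) :=
  isLUB_csSup (K.nonempty.image _) (K.isCompact.image (by fun_prop)).bddAbove

open RealInnerProductSpace in
lemma suppFn_segBody {n : ℕ} (K L : Body n) {t : ℝ} (h0 : 0 ≤ t) (h1 : t ≤ 1) (x : ESp n) :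
    suppFn (segBody K L t) x = (1 - t) * suppFn K x + t * suppFn L x := by
  apply le_antisymm
  · refine (isLUB_le_iff (suppFn_isLUB _ x)).2 ?_
    rintro _ ⟨y, hy, rfl⟩
    obtain ⟨k, hk, l, hl, rfl⟩ := mem_segBody.1 hy
    simp only [inner_add_right, inner_smul_right]
    have a := (suppFn_isLUB K x).1 ⟨k, hk, rfl⟩
    have b := (suppFn_isLUB L x).1 ⟨l, hl, rfl⟩
    have := mul_le_mul_of_nonneg_left a (sub_nonneg.2 h1)
    have := mul_le_mul_of_nonneg_left b h0
    simp only at *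
    linarith
  · have hc : Continuous fun y : ESp n => ⟪x, y⟫ := by fun_prop
    obtain ⟨k, hk, ek⟩ := (K.isCompact.image hc).sSup_mem (K.nonempty.image _)
    obtain ⟨l, hl, el⟩ := (L.isCompact.image hc).sSup_mem (L.nonempty.image _)
    have := (suppFn_isLUB (segBody K L t) x).1 ⟨_, mem_segBody.2 ⟨k, hk, l, hl, rfl⟩, rfl⟩
    simp only [inner_add_right, inner_smul_right] at this ek el
    rw [ek, el] at this
    exact this

/-- `K_+^∞` is closed under Minkowski convex combinations, since support functions, hence their
Hessians, combine linearly. -/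
lemma segBody_mem {n : ℕ} {K L : Body n} (hK : K ∈ KPlusInfty n) (hL : L ∈ KPlusInfty n)
    {t : ℝ} (h0 : 0 ≤ t) (h1 : t ≤ 1) : segBody K L t ∈ KPlusInfty n := by
  rcases h1.eq_or_lt with rfl | h1'
  · rwa [segBody_one]
  obtain ⟨hKi, hKs, hKp⟩ := hK
  obtain ⟨hLi, hLs, hLp⟩ := hL
  have ht : 0 < 1 - t := by linarith
  have hfun : suppFn (segBody K L t) = fun x => (1 - t) * suppFn K x + t * suppFn L x :=
    funext fun x => suppFn_segBody K L h0 h1 x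
  refine ⟨?_, ?_, ?_⟩
  · have hsub : interior ((1 - t) • (K : Set (ESp n))) + t • (L : Set (ESp n))
        ⊆ interior (segBody K L t : Set (ESp n)) :=
      subset_interior_add_left
    refine Set.Nonempty.mono hsub (Set.Nonempty.add ?_ L.nonempty.smul_set)
    rw [interior_smul₀ ht.ne']
    exact hKi.smul_set
  · rw [hfun]
    exact (contDiffOn_const.mul hKs).add (contDiffOn_const.mul hLs)
  · intro x hx v hxv hv
    have hopen : IsOpen ({(0 : ESp n)}ᶜ) := isOpen_compl_singleton
    have hd : ∀ f : ESp n → ℝ, ContDiffOn ℝ (⊤ : ℕ∞) f {(0 : ESp n)}ᶜ → ∀ y : ESp n, y ≠ 0 →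
        DifferentiableAt ℝ f y ∧ DifferentiableAt ℝ (fun z => fderiv ℝ f z v) y := by
      intro f hf y hy
      have hy' : ContDiffAt ℝ (⊤ : ℕ∞) f y := hf.contDiffAt (hopen.mem_nhds hy)
      refine ⟨hy'.differentiableAt (by simp), ?_⟩
      have : ContDiffAt ℝ 1 (fderiv ℝ f) y := hy'.fderiv_right (WithTop.coe_le_coe.2 le_top)
      exact (this.differentiableAt (by simp)).clm_apply (differentiableAt_const v)
    have hev : (fun y => fderiv ℝ (suppFn (segBody K L t)) y v) =ᶠ[nhds x]
        fun y => (1 - t) * fderiv ℝ (suppFn K) y v + t * fderiv ℝ (suppFn L) y v := by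
      filter_upwards [hopen.mem_nhds hx] with y hy
      have a := (hd _ hKs y hy).1.hasFDerivAt.const_mul (1 - t)
      have b := (hd _ hLs y hy).1.hasFDerivAt.const_mul t
      rw [hfun, HasFDerivAt.fderiv (f := fun x => (1 - t) * suppFn K x + t * suppFn L x) (a.add b)]
      simp
    rw [hev.fderiv_eq]
    have a := (hd _ hKs x hx).2.hasFDerivAt.const_mul (1 - t)
    have b := (hd _ hLs x hx).2.hasFDerivAt.const_mul t
    rw [HasFDerivAt.fderiv (f := fun y =>
      (1 - t) * fderiv ℝ (suppFn K) y v + t * fderiv ℝ (suppFn L) y v) (a.add b)]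
    have p := mul_pos ht (hKp x hx v hxv hv)
    have q := mul_nonneg h0 (hLp x hx v hxv hv).le
    simpa using add_pos_of_pos_of_nonneg p q

/-! ### Iterated convolutions of co-degree one mixed volumes -/

/-- Up to a positive constant depending only on the number of factors, the convolution of the
valuations `V(·[n-1], A_i)` is `V(·[n-m], A_1, …, A_m)`. -/
lemma convList_mixed {n : ℕ} (C : BFConvolution n) (m : ℕ) (hm : m ≤ n) :
    ∃ c : ℝ, 0 < c ∧ ∀ A : Fin m → Body n, (∀ i, A i ∈ KPlusInfty n) →
      convList C.conv (List.ofFn fun i => genMixedVal fun _ : Fin 1 => A i)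
        = (c : ℂ) • genMixedVal A := by
  induction m with
  | zero =>
    refine ⟨1, one_pos, fun A _ => ?_⟩
    simp [convList, genMixedVal_zero]
  | succ m ih =>
    obtain ⟨c, hc, h⟩ := ih (by omega)
    obtain ⟨d, hd, h'⟩ := C.conv_mixed 1 m (by omega)
    refine ⟨c * d, mul_pos hc hd, fun A hA => ?_⟩
    rw [List.ofFn_succ, convList, h (fun i => A i.succ) fun i => hA _, map_smul,
      h' _ _ (fun _ => hA 0) (fun i => hA _), smul_smul]
    push_cast
    congr 1
    refine genMixedVal_congr (by omega) _ _ fun i => ?_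
    rw [Fin.append_left_eq_cons]
    simp only [Function.comp]
    generalize Fin.cast (Nat.add_comm 1 m) i = j
    refine Fin.cases ?_ (fun j => ?_) j <;> simp

/-- The convolution of `n` co-degree one mixed volumes, as a positive multiple of the mixed
volume. -/
lemma convList_famAF {m : ℕ} (C : BFConvolution (m + 2)) :
    ∃ c : ℝ, 0 < c ∧ ∀ (M N : Body (m + 2)) (L : Fin m → Body (m + 2)),
      M ∈ KPlusInfty (m + 2) → N ∈ KPlusInfty (m + 2) → (∀ i, L i ∈ KPlusInfty (m + 2)) →
      C.conv (genMixedVal fun _ : Fin 1 => M) (C.conv (genMixedVal fun _ : Fin 1 => N)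
        (convList C.conv (List.ofFn fun i => genMixedVal fun _ : Fin 1 => L i)))
        = ((c * mixedVol (famAF M N L) : ℝ) : ℂ) • chiVal := by
  obtain ⟨c, hc, h⟩ := convList_mixed C (m + 2) le_rfl
  refine ⟨c, hc, fun M N L hM hN hL => ?_⟩
  have hfam : ∀ i : Fin m, famAF M N L i.succ.succ = L i := by
    intro i
    simp [famAF]
  have := h (famAF M N L) (by
    intro i
    refine Fin.cases hM (fun i => Fin.cases hN (fun i => ?_) i) i
    rw [hfam]; exact hL i)
  rw [List.ofFn_succ, List.ofFn_succ, convList, convList] at this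
  simp_rw [hfam] at this
  refine Eq.trans this ?_
  funext K
  simp [genMixedVal_full, chiVal]

lemma mixedVol_famAF_comm {m : ℕ} (M N : Body (m + 2)) (L : Fin m → Body (m + 2)) :
    mixedVol (famAF M N L) = mixedVol (famAF N M L) := by
  rw [← mixedVol_perm _ (Equiv.swap 0 1)]
  congr 1
  funext i
  refine Fin.cases (by simp [famAF]) (fun i => Fin.cases (by simp [famAF]) (fun i => ?_) i) i
  rw [Equiv.swap_apply_of_ne_of_ne (by simp) (by simp [Fin.ext_iff])]
  simp [famAF]

lemma mixedVal_ne_zero {n : ℕ} {M : Body n} (hM : M ∈ KPlusInfty n) :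
    genMixedVal (fun _ : Fin 1 => M) ≠ 0 := by
  intro h
  have h1 := congrFun h M
  have : genMixedVal (fun _ : Fin 1 => M) M = ((volume (M : Set (ESp n))).toReal : ℂ) := by
    rw [← mixedVol_const]
    unfold genMixedVal
    congr 2
    funext i
    simp
  rw [this] at h1
  have hpos : 0 < (volume (M : Set (ESp n))).toReal :=
    ENNReal.toReal_pos (Measure.measure_pos_of_nonempty_interior _ hM.1).ne'
      M.isCompact.measure_lt_top.ne
  simp only [Pi.zero_apply, Complex.ofReal_eq_zero] at h1
  exact hpos.ne' h1

/-- If `V(M, M, L)` never vanishes on `K_+^∞`, it is positive there: deform the bodies `L_i` to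
`M` one at a time, along Minkowski segments. -/
lemma mixedVol_pos {m : ℕ} (C : BFConvolution (m + 2)) {M : Body (m + 2)}
    (hM : M ∈ KPlusInfty (m + 2))
    (hne : ∀ L : Fin m → Body (m + 2), (∀ i, L i ∈ KPlusInfty (m + 2)) →
      mixedVol (famAF M M L) ≠ 0)
    (L : Fin m → Body (m + 2)) (hL : ∀ i, L i ∈ KPlusInfty (m + 2)) :
    0 < mixedVol (famAF M M L) := by
  have hfam : ∀ L : Fin m → Body (m + 2), famAF M M L = Fin.cons M (Fin.cons M L) := by
    intro L
    funext i
    refine Fin.cases (by simp [famAF]) (fun i => Fin.cases (by simp [famAF]) (fun i => ?_) i) i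
    simp [famAF]
  have hmem : ∀ L : Fin m → Body (m + 2), (∀ i, L i ∈ KPlusInfty (m + 2)) →
      ∀ i, famAF M M L i ∈ KPlusInfty (m + 2) := by
    intro L hL i
    rw [hfam]
    refine Fin.cases hM (fun i => Fin.cases hM (fun i => ?_) i) i
    exact hL i
  have hstep : ∀ L : Fin m → Body (m + 2), (∀ i, L i ∈ KPlusInfty (m + 2)) →
      ∀ (j : Fin m) (X : Body (m + 2)), X ∈ KPlusInfty (m + 2) →
      0 < mixedVol (famAF M M L) → 0 < mixedVol (famAF M M (Function.update L j X)) := by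
    intro L hL j X hX hpos
    have hupd : ∀ Y, famAF M M (Function.update L j Y)
        = Function.update (famAF M M L) j.succ.succ Y := by
      intro Y
      simp only [hfam, ← Fin.cons_update]
    let f : ℝ → ℝ := fun t => mixedVol (famAF M M (Function.update L j (segBody (L j) X t)))
    have hf : Continuous f := by
      simp only [f, hupd]
      exact (continuous_mixedVol_update C _ (hmem L hL) _).comp (continuous_segBody _ _)
    have f0 : 0 < f 0 := by simpa [f, segBody_zero] using hpos
    have f1 : f 1 = mixedVol (famAF M M (Function.update L j X)) := by simp [f, segBody_one]
    rw [← f1]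
    by_contra hneg
    obtain ⟨t, ht, hft⟩ := intermediate_value_Icc' zero_le_one hf.continuousOn
      ⟨not_lt.1 hneg, f0.le⟩
    refine hne _ ?_ hft
    intro i
    by_cases hij : i = j
    · subst hij
      simpa using segBody_mem (hL i) hX ht.1 ht.2
    · simpa [Function.update_of_ne hij] using hL i
  have hall : ∀ s : Finset (Fin m), 0 < mixedVol (famAF M M (s.piecewise L fun _ => M)) := by
    intro s
    induction s using Finset.induction_on with
    | empty =>
      have : famAF M M (fun _ : Fin m => M) = fun _ => M := by
        funext i
        simp [famAF]
      rw [Finset.piecewise_empty, this, mixedVol_const]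
      exact ENNReal.toReal_pos (Measure.measure_pos_of_nonempty_interior _ hM.1).ne'
        M.isCompact.measure_lt_top.ne
    | insert j s _ ih =>
      rw [Finset.piecewise_insert]
      refine hstep _ (fun i => ?_) j _ (hL j) ih
      by_cases hi : i ∈ s <;> simp [hi, hL, hM]
  simpa using hall Finset.univ

/-- **The mixed Hodge–Riemann relations in co-degree 1 imply the Aleksandrov–Fenchel
inequality** (Corollary 8.1). Suppose that for all `K_2, …, K_n ∈ K_+^∞` and every non-zero
`φ ∈ Val_{n-1}^∞` with `φ * V(·[n-1],K_2) * ⋯ * V(·[n-1],K_n) = 0` one has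
`-conj(φ) * φ * V(·[n-1],K_3) * ⋯ * V(·[n-1],K_n) > 0` (read in `Val_0^∞ ≅ ℂ` via `χ`).
Then `V(K_1,K_2,K_3,…,K_n)² ≥ V(K_1,K_1,K_3,…,K_n) V(K_2,K_2,K_3,…,K_n)` for all
`K_1, …, K_n ∈ K_+^∞`. -/
theorem mixed_hodge_riemann_implies_aleksandrov_fenchel (n : ℕ) (hn : 2 ≤ n)
    (C : BFConvolution n)
    (hyp : ∀ L : Fin (n - 1) → Body n, (∀ i, L i ∈ KPlusInfty n) →
      ∀ φ : Vl n, φ ∈ C.Smooth → IsHomog (n - 1) φ → φ ≠ 0 →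
      convList C.conv (φ :: List.ofFn fun i : Fin (n - 1) =>
        genMixedVal fun _ : Fin 1 => L i) = 0 →
      ∃ r : ℝ, convList C.conv (conjVal φ :: φ :: List.ofFn fun i : Fin (n - 2) =>
          genMixedVal fun _ : Fin 1 => L (Fin.cast (by omega) i.succ)) = (r : ℂ) • chiVal
        ∧ r < 0) :
    ∀ K₁ K₂ : Body n, K₁ ∈ KPlusInfty n → K₂ ∈ KPlusInfty n →
    ∀ L : Fin (n - 2) → Body n, (∀ i, L i ∈ KPlusInfty n) →
      mixedVol (famAF K₁ K₁ L) * mixedVol (famAF K₂ K₂ L) ≤ mixedVol (famAF K₁ K₂ L) ^ 2 := by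
  obtain ⟨m, rfl⟩ : ∃ m, n = m + 2 := ⟨n - 2, by omega⟩
  obtain ⟨κ, hκ, hconv⟩ := convList_famAF C
  let v : Body (m + 2) → Vl (m + 2) := fun K => genMixedVal fun _ : Fin 1 => K
  let W : (Fin m → Body (m + 2)) → Vl (m + 2) := fun L =>
    convList C.conv (List.ofFn fun i => v (L i))
  have hchi : ∀ r : ℝ, (r : ℂ) • (chiVal : Vl (m + 2)) = 0 → r = 0 := by
    intro r h
    simpa [chiVal] using congrFun h (ballBody (m + 2))
  -- The hypothesis in terms of the quadratic form `φ ↦ conj φ * φ * V(·,L_1) * ⋯`.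
  have hHR : ∀ K : Body (m + 2), K ∈ KPlusInfty (m + 2) → ∀ L : Fin m → Body (m + 2),
      (∀ i, L i ∈ KPlusInfty (m + 2)) → ∀ φ : Vl (m + 2), φ ∈ C.Smooth →
      IsHomog (m + 1) φ → φ ≠ 0 → C.conv φ (C.conv (v K) (W L)) = 0 →
      ∃ r : ℝ, C.conv (conjVal φ) (C.conv φ (W L)) = (r : ℂ) • chiVal ∧ r < 0 := by
    intro K hK L hL φ hφ hh h0 hφK
    refine hyp (Fin.cons K L : Fin (m + 1) → Body (m + 2))
      (fun i => Fin.cases hK hL i) φ hφ hh h0 ?_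
    have : (List.ofFn fun i : Fin (m + 1) => genMixedVal fun _ : Fin 1 =>
        (Fin.cons K L : Fin (m + 1) → Body (m + 2)) i) = v K :: List.ofFn fun i => v (L i) := by
      rw [List.ofFn_succ]
      simp [v]
    exact (congrArg (fun l => convList C.conv (φ :: l)) this).trans hφK
  have hv : ∀ K : Body (m + 2), K ∈ KPlusInfty (m + 2) →
      v K ∈ C.Smooth ∧ IsHomog (m + 1) (v K) := fun K hK =>
    C.mixed_smooth 1 (by omega) _ fun _ => hK
  have hreal : ∀ (K X : Body (m + 2)), (starRingEnd ℂ) (v K X) = v K X := fun K X =>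
    Complex.conj_ofReal _
  intro K₁ K₂ hK₁ hK₂ L hL
  -- If `V(K₂, K₂, L)` vanished, `φ = V(·[n-1], K₂)` would be primitive with `φ * φ * ⋯ = 0`.
  have hpos : 0 < mixedVol (famAF K₂ K₂ L) := by
    refine mixedVol_pos C hK₂ (fun L hL h0 => ?_) L hL
    have hz : C.conv (v K₂) (C.conv (v K₂) (W L)) = 0 := by
      have := hconv K₂ K₂ L hK₂ hK₂ hL
      rw [h0] at this
      simpa using this
    obtain ⟨r, hr, hr0⟩ := hHR K₂ hK₂ L hL (v K₂) (hv K₂ hK₂).1 (hv K₂ hK₂).2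
      (mixedVal_ne_zero hK₂) hz
    have hc : conjVal (v K₂) = v K₂ := funext fun X => hreal K₂ X
    rw [hc, hz] at hr
    exact hr0.ne (hchi r hr.symm)
  have e11 := hconv K₁ K₁ L hK₁ hK₁ hL
  have e12 := hconv K₁ K₂ L hK₁ hK₂ hL
  have e21 := hconv K₂ K₁ L hK₂ hK₁ hL
  have e22 := hconv K₂ K₂ L hK₂ hK₂ hL
  rw [← mixedVol_famAF_comm] at e21
  set a := mixedVol (famAF K₁ K₁ L)
  set b := mixedVol (famAF K₁ K₂ L)
  set c := mixedVol (famAF K₂ K₂ L)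
  change C.conv (v K₁) (C.conv (v K₁) (W L)) = _ at e11
  change C.conv (v K₁) (C.conv (v K₂) (W L)) = _ at e12
  change C.conv (v K₂) (C.conv (v K₁) (W L)) = _ at e21
  change C.conv (v K₂) (C.conv (v K₂) (W L)) = _ at e22
  let φ : Vl (m + 2) := (c : ℂ) • v K₁ - (b : ℂ) • v K₂
  have hφS : φ ∈ C.Smooth :=
    C.Smooth.sub_mem (C.Smooth.smul_mem _ (hv K₁ hK₁).1) (C.Smooth.smul_mem _ (hv K₂ hK₂).1)
  have hφH : IsHomog (m + 1) φ :=
    (homogSub (m + 2) (m + 1)).sub_mem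
      ((homogSub (m + 2) (m + 1)).smul_mem _ (hv K₁ hK₁).2)
      ((homogSub (m + 2) (m + 1)).smul_mem _ (hv K₂ hK₂).2)
  have hφc : conjVal φ = φ := by
    funext X
    simp [conjVal, φ, hreal]
  have hφ2 : C.conv φ (C.conv (v K₂) (W L)) = 0 := by
    simp only [φ, map_sub, map_smul, LinearMap.sub_apply, LinearMap.smul_apply, e12, e22,
      smul_smul, ← sub_smul]
    push_cast
    rw [show (c : ℂ) * (κ * b) - b * (κ * c) = 0 by ring, zero_smul]
  have hφφ : C.conv φ (C.conv φ (W L)) = ((κ * c * (a * c - b ^ 2) : ℝ) : ℂ) • chiVal := by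
    simp only [φ, map_sub, map_smul, LinearMap.sub_apply, LinearMap.smul_apply, e11, e12, e21,
      e22, smul_smul, ← sub_smul]
    congr 1
    push_cast
    ring
  have hκc : 0 < κ * c := mul_pos hκ hpos
  by_cases h0 : φ = 0
  · rw [h0] at hφφ
    have := hchi (κ * c * (a * c - b ^ 2)) (by rw [← hφφ, map_zero, LinearMap.zero_apply])
    rcases mul_eq_zero.1 this with h | h
    · exact absurd h hκc.ne'
    · linarith
  · obtain ⟨r, hr, hr0⟩ := hHR K₂ hK₂ L hL φ hφS hφH h0 hφ2
    rw [hφc, hφφ] at hr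
    have hr' : κ * c * (a * c - b ^ 2) - r = 0 :=
      hchi _ (by rw [Complex.ofReal_sub, sub_smul, hr, sub_self])
    by_contra hlt
    have : 0 < κ * c * (a * c - b ^ 2) := mul_pos hκc (by linarith [not_le.1 hlt])
    linarith
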